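/- Let p_n/q_n be the n-th continued fraction convergent of π, let v₂ = v₂(p_n) be the 2-adic valuation of p_n, and set x_n = ((2^(2+2v₂) + 1)/2^(2+2v₂))·π·p_n. Then there is a constant c > 0 such that |cos((2x_n + 1)·p_n)| ≤ c/q_n for all n ≥ 1. -/

import Mathlib

open Real

lemma aux_dens_one_le (n : ℕ) : 1 ≤ (GenContFract.of (π : ℝ)).dens n := by
  induction n with
  | zero => simp
  | succ k ih => exact ih.trans GenContFract.of_den_mono

lemma aux_approx (n : ℕ) :
    |(GenContFract.of (π : ℝ)).nums n - (GenContFract.of (π : ℝ)).dens n * π|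
      ≤ 1 / (GenContFract.of (π : ℝ)).dens n := by
  have h1 := aux_dens_one_le n
  have h3 : (GenContFract.of (π : ℝ)).dens n ≤ (GenContFract.of (π : ℝ)).dens (n+1) :=
    GenContFract.of_den_mono
  have hc : |π - (GenContFract.of (π : ℝ)).convs n| ≤
      1 / ((GenContFract.of (π : ℝ)).dens n * (GenContFract.of (π : ℝ)).dens (n+1)) := by
    by_cases ht : (GenContFract.of (π : ℝ)).TerminatedAt n
    · rw [← GenContFract.of_correctness_of_terminatedAt ht, sub_self, abs_zero]
      have := aux_dens_one_le (n+1)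
      positivity
    · exact GenContFract.abs_sub_convs_le ht
  rw [GenContFract.conv_eq_num_div_den] at hc
  set d := (GenContFract.of (π : ℝ)).dens n
  set d' := (GenContFract.of (π : ℝ)).dens (n+1)
  set a := (GenContFract.of (π : ℝ)).nums n
  have hd : 0 < d := by linarith
  have e : a - d * π = -(d * (π - a / d)) := by field_simp; ring
  rw [e, abs_neg, abs_mul, abs_of_pos hd]
  calc d * |π - a / d| ≤ d * (1 / (d * d')) := by gcongr
    _ = 1 / d' := by field_simp
    _ ≤ 1 / d := by gcongr

/-- Let `p n / q n` be the `n`-th continued fraction convergent of `π`, let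
`v₂ = v₂(p n)` be the 2-adic valuation of `p n`, and set
`x n = ((2^(2+2v₂) + 1)/2^(2+2v₂))·π·(p n)`.  Then there is a constant `c > 0`
such that `|cos((2·x n + 1)·p n)| ≤ c / q n` for all `n ≥ 1`. -/
theorem abs_cos_shift_le_div_den
    (p q : ℕ → ℕ)
    (hp : ∀ n, (p n : ℝ) = (GenContFract.of (π : ℝ)).nums n)
    (hq : ∀ n, (q n : ℝ) = (GenContFract.of (π : ℝ)).dens n)
    (x : ℕ → ℝ)
    (hx : ∀ n, x n =
      ((2 ^ (2 + 2 * padicValNat 2 (p n)) + 1 : ℝ) /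
        (2 ^ (2 + 2 * padicValNat 2 (p n)) : ℝ)) * π * (p n : ℝ)) :
    ∃ c : ℝ, 0 < c ∧ ∀ n : ℕ, 1 ≤ n →
      |Real.cos ((2 * x n + 1) * (p n : ℝ))| ≤ c / (q n : ℝ) := by
  refine ⟨1, one_pos, fun n _ => ?_⟩
  have h1 := aux_dens_one_le n
  have h2 := aux_approx n
  rw [hx n]
  rw [← hp, ← hq] at h2
  rw [← hq] at h1
  generalize p n = P at *
  generalize q n = Q at *
  have hP : P ≠ 0 := by
    rintro rfl
    have h4 : 1 / (Q : ℝ) ≤ 1 := by rw [div_le_one (by linarith)]; exact h1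
    have h5 := neg_le_of_abs_le h2
    have := Real.pi_gt_three
    push_cast at h5
    nlinarith
  obtain ⟨m, hm⟩ : 2 ^ padicValNat 2 P ∣ P := pow_padicValNat_dvd
  have hodd : ¬ 2 ∣ m := by
    rintro ⟨k, hk⟩
    apply pow_succ_padicValNat_not_dvd (p := 2) hP
    exact ⟨k, by rw [pow_succ, mul_assoc, ← hk]; exact hm⟩
  generalize padicValNat 2 P = v at *
  obtain ⟨k, hk⟩ : ∃ k, m ^ 2 = 4 * k + 1 := by
    obtain ⟨j, hj⟩ : ∃ j, m = 2 * j + 1 := ⟨m / 2, by omega⟩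
    exact ⟨j ^ 2 + j, by rw [hj]; ring⟩
  have hk' : (m : ℝ) ^ 2 = 4 * k + 1 := by exact_mod_cast hk
  have hm' : (P : ℝ) = 2 ^ v * m := by exact_mod_cast hm
  have e : (2 * (((2 ^ (2 + 2 * v) + 1 : ℝ) / (2 ^ (2 + 2 * v) : ℝ)) * π * (P : ℝ)) + 1) * (P : ℝ)
      = ((P : ℝ) + π / 2) + ((2 * P ^ 2 + 2 * k : ℕ) : ℝ) * π := by
    have e2 : (2 : ℝ) ^ (2 + 2 * v) = 4 * (2 ^ v) ^ 2 := by rw [pow_add, pow_mul']; norm_num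
    have e3 : (P : ℝ) ^ 2 / (2 : ℝ) ^ (2 + 2 * v) = k + 1 / 4 := by
      rw [e2, hm', mul_pow, hk']; field_simp
    have e4 : ((2 ^ (2 + 2 * v) + 1 : ℝ) / (2 ^ (2 + 2 * v) : ℝ)) = 1 + 1 / 2 ^ (2 + 2 * v) := by
      field_simp
    rw [e4]
    push_cast
    linear_combination 2 * π * e3
  rw [e, Real.cos_add_nat_mul_pi, abs_mul, abs_neg_one_pow, one_mul,
    Real.cos_add_pi_div_two, abs_neg]
  have e5 : |Real.sin P| = |Real.sin ((P : ℝ) - Q * π)| := by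
    rw [Real.sin_sub_nat_mul_pi, abs_mul]; simp
  rw [e5]
  exact Real.abs_sin_le_abs.trans h2
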